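/- arXiv:2405.09135 — 2 statements merged into one kernel-verified Lean document; each statement's English description precedes it below -/
import Mathlib

section
/- For the two-qubit example model, the subspace S_1 equals the ℂ-linear span of the three matrices σx⊗I₂, σy⊗I₂ and σz⊗I₂. -/
/-!
For Hamiltonians and operators in product form whose second factors commute, the Liouvillian acts on
the first factor only: `L_{A ⊗ B}(C ⊗ D) = (-i[A, C]) ⊗ BD` (`Liou_kron`). With the Pauli
commutation relations, both controls map `span {σa ⊗ B}` into itself for `B = σz` and `B = I₂`,
and starting from `σz ⊗ B` they reach the other two generators up to nonzero scalars.
Since `σz² = I₂`, `L₀` sends `σx ⊗ σz` to `2 σy ⊗ I₂`, `σy ⊗ σz` to `-2 σx ⊗ I₂`, and kills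
`σz ⊗ σz`. Hence `S₀ ⊆ span {σa ⊗ σz}` gives `S₁ ⊆ span {σa ⊗ I₂}`. Conversely
`σx ⊗ σz, σy ⊗ σz ∈ S₀` give `σy ⊗ I₂, σx ⊗ I₂ ∈ S₁`, and one more control commutator gives
`σz ⊗ I₂`.
-/

open Matrix Kronecker

/-- The Pauli matrix `σx`. -/
noncomputable def σx : Matrix (Fin 2) (Fin 2) ℂ := !![0, 1; 1, 0]

/-- The Pauli matrix `σy`. -/
noncomputable def σy : Matrix (Fin 2) (Fin 2) ℂ := !![0, -Complex.I; Complex.I, 0]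

/-- The Pauli matrix `σz`. -/
noncomputable def σz : Matrix (Fin 2) (Fin 2) ℂ := !![1, 0; 0, -1]

/-- The 2×2 identity matrix. -/
noncomputable def I₂ : Matrix (Fin 2) (Fin 2) ℂ := 1

/-- The drift/encoding Hamiltonian `H₀ = σz ⊗ σz` of the two-qubit example model. -/
noncomputable def H0 : Matrix (Fin 2 × Fin 2) (Fin 2 × Fin 2) ℂ := σz ⊗ₖ σz

/-- The control Hamiltonians `H₁ = σx ⊗ I₂` and `H₂ = σy ⊗ I₂` of the two-qubit example model. -/
noncomputable def Hc : Fin 2 → Matrix (Fin 2 × Fin 2) (Fin 2 × Fin 2) ℂ := ![σx ⊗ₖ I₂, σy ⊗ₖ I₂]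

/-- The observable `M = σz ⊗ σz` of the two-qubit example model. -/
noncomputable def Mobs : Matrix (Fin 2 × Fin 2) (Fin 2 × Fin 2) ℂ := σz ⊗ₖ σz

/-- The Liouvillian `L(A) = [−i H, A]` as a linear endomorphism of matrices. -/
noncomputable def Liou (H : Matrix (Fin 2 × Fin 2) (Fin 2 × Fin 2) ℂ) :
    Module.End ℂ (Matrix (Fin 2 × Fin 2) (Fin 2 × Fin 2) ℂ) :=
  LinearMap.mulLeft ℂ ((-Complex.I) • H) - LinearMap.mulRight ℂ ((-Complex.I) • H)

/-- `Oset S` is the ℂ-linear span of all operators `L_{j₁} ∘ ⋯ ∘ L_{jₙ}(A)` with `n ≥ 0`,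
`j₁, …, jₙ ∈ {1, 2}` and `A ∈ S` (including `A` itself for `n = 0`). -/
noncomputable def Oset (S : Set (Matrix (Fin 2 × Fin 2) (Fin 2 × Fin 2) ℂ)) :
    Submodule ℂ (Matrix (Fin 2 × Fin 2) (Fin 2 × Fin 2) ℂ) :=
  Submodule.span ℂ
    {X | ∃ (w : List (Fin 2)) (A : Matrix (Fin 2 × Fin 2) (Fin 2 × Fin 2) ℂ), A ∈ S ∧
      ((w.map fun j => Liou (Hc j)).prod) A = X}

/-- The subspaces `S_0 = O({M})`, `S_k = O(L₀(S_{k-1}))` of the two-qubit example model. -/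
noncomputable def Sk : ℕ → Submodule ℂ (Matrix (Fin 2 × Fin 2) (Fin 2 × Fin 2) ℂ)
  | 0 => Oset {Mobs}
  | (k + 1) => Oset (Liou H0 '' (Sk k))

/-- The span of the operators `σa ⊗ B`, `a = x, y, z`, for a fixed second factor `B`. -/
noncomputable def pauliSpan (B : Matrix (Fin 2) (Fin 2) ℂ) :
    Submodule ℂ (Matrix (Fin 2 × Fin 2) (Fin 2 × Fin 2) ℂ) :=
  Submodule.span ℂ {σx ⊗ₖ B, σy ⊗ₖ B, σz ⊗ₖ B}

lemma kron_x_mem (B : Matrix (Fin 2) (Fin 2) ℂ) : σx ⊗ₖ B ∈ pauliSpan B :=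
  Submodule.subset_span (by simp)

lemma kron_y_mem (B : Matrix (Fin 2) (Fin 2) ℂ) : σy ⊗ₖ B ∈ pauliSpan B :=
  Submodule.subset_span (by simp)

lemma kron_z_mem (B : Matrix (Fin 2) (Fin 2) ℂ) : σz ⊗ₖ B ∈ pauliSpan B :=
  Submodule.subset_span (by simp)

lemma pauliSpan_le {B : Matrix (Fin 2) (Fin 2) ℂ}
    {V : Submodule ℂ (Matrix (Fin 2 × Fin 2) (Fin 2 × Fin 2) ℂ)}
    (hx : σx ⊗ₖ B ∈ V) (hy : σy ⊗ₖ B ∈ V) (hz : σz ⊗ₖ B ∈ V) : pauliSpan B ≤ V := by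
  refine Submodule.span_le.2 ?_
  rintro _ (rfl | rfl | rfl)
  exacts [hx, hy, hz]

lemma Liou_kron (A B C D : Matrix (Fin 2) (Fin 2) ℂ) (h : D * B = B * D) :
    Liou (A ⊗ₖ B) (C ⊗ₖ D) = ((-Complex.I) • (A * C - C * A)) ⊗ₖ (B * D) := by
  simp only [Liou, LinearMap.sub_apply, LinearMap.mulLeft_apply, LinearMap.mulRight_apply,
    smul_mul_assoc, mul_smul_comm, ← Matrix.mul_kronecker_mul, h]
  ext i j
  simp only [Matrix.sub_apply, Matrix.smul_apply, Matrix.kroneckerMap_apply, smul_eq_mul]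
  ring

lemma comm_xy : (-Complex.I) • (σx * σy - σy * σx) = (2 : ℂ) • σz := by
  ext i j
  fin_cases i <;> fin_cases j <;> simp [σx, σy, σz] <;> ring_nf <;> simp

lemma comm_yz : (-Complex.I) • (σy * σz - σz * σy) = (2 : ℂ) • σx := by
  ext i j
  fin_cases i <;> fin_cases j <;> simp [σx, σy, σz] <;> ring_nf <;> simp

lemma comm_zx : (-Complex.I) • (σz * σx - σx * σz) = (2 : ℂ) • σy := by
  ext i j
  fin_cases i <;> fin_cases j <;> simp [σx, σy, σz] <;> ring_nf

lemma comm_swap {A C E : Matrix (Fin 2) (Fin 2) ℂ}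
    (h : (-Complex.I) • (A * C - C * A) = (2 : ℂ) • E) :
    (-Complex.I) • (C * A - A * C) = (-2 : ℂ) • E := by
  rw [← neg_sub, smul_neg, h, neg_smul]

lemma σz_mul_self : σz * σz = I₂ := by
  ext i j
  fin_cases i <;> fin_cases j <;> simp [σz, I₂]

/-- A control Hamiltonian `A ⊗ I₂` leaves the second factor unchanged. -/
lemma Liou_control (A B C : Matrix (Fin 2) (Fin 2) ℂ) :
    Liou (A ⊗ₖ I₂) (C ⊗ₖ B) = ((-Complex.I) • (A * C - C * A)) ⊗ₖ B := by
  rw [Liou_kron _ _ _ _ (by simp [I₂])]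
  simp [I₂]

/-- The drift acts on `C ⊗ σz` by turning the second factor into `σz² = I₂`. -/
lemma Liou_drift (C : Matrix (Fin 2) (Fin 2) ℂ) :
    Liou H0 (C ⊗ₖ σz) = ((-Complex.I) • (σz * C - C * σz)) ⊗ₖ I₂ := by
  rw [H0, Liou_kron _ _ _ _ rfl, σz_mul_self]

lemma Liou_control_mem (B : Matrix (Fin 2) (Fin 2) ℂ) (j : Fin 2) :
    pauliSpan B ≤ (pauliSpan B).comap (Liou (Hc j)) := by
  have hx := kron_x_mem B
  have hy := kron_y_mem B
  have hz := kron_z_mem B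
  apply pauliSpan_le <;> rw [Submodule.mem_comap] <;> fin_cases j <;>
    simp only [Hc, Fin.zero_eta, Fin.mk_one, Matrix.cons_val_zero, Matrix.cons_val_one,
      Liou_control, comm_xy, comm_yz, comm_swap comm_xy, comm_swap comm_zx, sub_self, smul_zero,
      Matrix.zero_kronecker, Matrix.smul_kronecker]
  all_goals first | exact zero_mem _ | exact Submodule.smul_mem _ _ ‹_›

/-- `Oset S` is contained in every control-invariant subspace containing `S`. -/
lemma Oset_le {S : Set (Matrix (Fin 2 × Fin 2) (Fin 2 × Fin 2) ℂ)}
    {V : Submodule ℂ (Matrix (Fin 2 × Fin 2) (Fin 2 × Fin 2) ℂ)} (hS : S ⊆ V)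
    (hV : ∀ j, V ≤ V.comap (Liou (Hc j))) : Oset S ≤ V := by
  refine Submodule.span_le.2 ?_
  rintro _ ⟨w, A, hA, rfl⟩
  induction w with
  | nil => simpa using hS hA
  | cons j w ih => exact hV j ih

lemma subset_Oset (S : Set (Matrix (Fin 2 × Fin 2) (Fin 2 × Fin 2) ℂ)) : S ⊆ Oset S :=
  fun A hA => Submodule.subset_span ⟨[], A, hA, by simp⟩

/-- `Oset S` is itself control-invariant. -/
lemma Oset_invariant (S : Set (Matrix (Fin 2 × Fin 2) (Fin 2 × Fin 2) ℂ)) (j : Fin 2) :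
    Oset S ≤ (Oset S).comap (Liou (Hc j)) := by
  refine Submodule.span_le.2 ?_
  rintro _ ⟨w, A, hA, rfl⟩
  exact Submodule.subset_span ⟨j :: w, A, hA, by simp⟩

lemma Sk_zero_eq : Sk 0 = pauliSpan σz := by
  have hM : σz ⊗ₖ σz ∈ Oset {Mobs} := subset_Oset _ rfl
  apply le_antisymm
  · exact Oset_le (Set.singleton_subset_iff.2 (kron_z_mem σz)) (Liou_control_mem σz)
  · refine pauliSpan_le ?_ ?_ hM
    · have h : Liou (σy ⊗ₖ I₂) (σz ⊗ₖ σz) ∈ Oset {Mobs} := Oset_invariant _ 1 hM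
      rw [Liou_control, comm_yz, Matrix.smul_kronecker] at h
      exact (Submodule.smul_mem_iff _ (by norm_num)).1 h
    · have h : Liou (σx ⊗ₖ I₂) (σz ⊗ₖ σz) ∈ Oset {Mobs} := Oset_invariant _ 0 hM
      rw [Liou_control, comm_swap comm_zx, Matrix.smul_kronecker] at h
      exact (Submodule.smul_mem_iff _ (by norm_num)).1 h

/-- For the two-qubit example model, `S_1 = spanℂ{σx⊗I₂, σy⊗I₂, σz⊗I₂}`. -/
theorem Sk_one_eq :
    Sk 1 = Submodule.span ℂ {σx ⊗ₖ I₂, σy ⊗ₖ I₂, σz ⊗ₖ I₂} := by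
  change Oset (Liou H0 '' (Sk 0)) = pauliSpan I₂
  rw [Sk_zero_eq]
  apply le_antisymm
  · refine Oset_le (Set.image_subset_iff.2 ?_) (Liou_control_mem I₂)
    change pauliSpan σz ≤ (pauliSpan I₂).comap (Liou H0)
    apply pauliSpan_le <;> rw [Submodule.mem_comap, Liou_drift]
    · rw [comm_zx, Matrix.smul_kronecker]
      exact Submodule.smul_mem _ _ (kron_y_mem I₂)
    · rw [comm_swap comm_yz, Matrix.smul_kronecker]
      exact Submodule.smul_mem _ _ (kron_x_mem I₂)
    · simp
  · set V := Oset (Liou H0 '' (pauliSpan σz))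
    have hx : σx ⊗ₖ I₂ ∈ V := by
      have h : Liou H0 (σy ⊗ₖ σz) ∈ V := subset_Oset _ ⟨_, kron_y_mem σz, rfl⟩
      rw [Liou_drift, comm_swap comm_yz, Matrix.smul_kronecker] at h
      exact (Submodule.smul_mem_iff _ (by norm_num)).1 h
    have hy : σy ⊗ₖ I₂ ∈ V := by
      have h : Liou H0 (σx ⊗ₖ σz) ∈ V := subset_Oset _ ⟨_, kron_x_mem σz, rfl⟩
      rw [Liou_drift, comm_zx, Matrix.smul_kronecker] at h
      exact (Submodule.smul_mem_iff _ (by norm_num)).1 h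
    refine pauliSpan_le hx hy ?_
    have h : Liou (σx ⊗ₖ I₂) (σy ⊗ₖ I₂) ∈ V := Oset_invariant _ 0 hy
    rw [Liou_control, comm_xy, Matrix.smul_kronecker] at h
    exact (Submodule.smul_mem_iff _ (by norm_num)).1 h
end

section
/- For the two-qubit example model with initial state ψ0 = |0⟩⊗|0⟩ (the first standard basis vector of ℂ^4), for every k ≥ 0 there exists A ∈ S_k with ⟨ψ0, A ψ0⟩ ≠ 0; that is, the necessary condition for full expressivity ⟨ψ0| S_k |ψ0⟩ ≠ {0} holds for all k. -/
/-!
All the operators needed are product operators `P ⊗ B` with `B` a power of `σz`. On these the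
Liouvillians act through the Pauli commutation relations of the first factor: up to scalars,
`L₁` sends `σz ⊗ B` to `σy ⊗ B`, then `L₀` sends this to `σx ⊗ σz B`, and `L₂` sends that to
`σz ⊗ σz B`. Each `S_k` is stable under `L₁` and `L₂`, so by induction
`σz ⊗ σz ^ (k + 1) ∈ S_k` (`σz_kronecker_pow_mem_Sk`), and the expectation of this operator
in `|00⟩` is `1`.
-/

open Matrix Kronecker

/-- The initial state `|0⟩ ⊗ |0⟩`, the first standard basis vector of `ℂ⁴`. -/
noncomputable def ψ00 : Fin 2 × Fin 2 → ℂ := fun q => if q = (0, 0) then 1 else 0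

/-- A Liouvillian of a product Hamiltonian acts as a commutator on the first factor and as
multiplication on the second, as soon as the second factors commute. -/
lemma Liou_kronecker (P Q B C : Matrix (Fin 2) (Fin 2) ℂ) (h : Commute B C) :
    Liou (P ⊗ₖ B) (Q ⊗ₖ C) = ((-Complex.I) • (P * Q - Q * P)) ⊗ₖ (B * C) := by
  have hs : (P * Q - Q * P) ⊗ₖ (B * C) = (P * Q) ⊗ₖ (B * C) - (Q * P) ⊗ₖ (B * C) := by
    ext i j
    simp [sub_mul]
  rw [smul_kronecker, hs, smul_sub]
  simp only [Liou, LinearMap.sub_apply, LinearMap.mulLeft_apply, LinearMap.mulRight_apply,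
    smul_mul_assoc, mul_smul_comm, ← mul_kronecker_mul, h.eq]

lemma comm_σx_σz : (-Complex.I) • (σx * σz - σz * σx) = (-2 : ℂ) • σy := by
  ext i j
  fin_cases i <;> fin_cases j <;> simp [σx, σy, σz] <;> ring

lemma comm_σz_σy : (-Complex.I) • (σz * σy - σy * σz) = (-2 : ℂ) • σx := by
  ext i j
  fin_cases i <;> fin_cases j <;> simp [σx, σy, σz] <;> ring_nf <;> simp

lemma comm_σy_σx : (-Complex.I) • (σy * σx - σx * σy) = (-2 : ℂ) • σz := by
  ext i j
  fin_cases i <;> fin_cases j <;> simp [σx, σy, σz] <;> ring_nf <;> simp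

lemma Liou_Hc_mem_Oset {S : Set (Matrix (Fin 2 × Fin 2) (Fin 2 × Fin 2) ℂ)} (j : Fin 2)
    {A : Matrix (Fin 2 × Fin 2) (Fin 2 × Fin 2) ℂ} (hA : A ∈ Oset S) :
    Liou (Hc j) A ∈ Oset S := by
  unfold Oset at hA ⊢
  induction hA using Submodule.span_induction with
  | mem X hX =>
    obtain ⟨w, B, hB, rfl⟩ := hX
    exact Submodule.subset_span ⟨j :: w, B, hB, by simp⟩
  | zero => simp
  | add X Y _ _ hX hY => rw [map_add]; exact add_mem hX hY
  | smul c X _ hX => rw [map_smul]; exact Submodule.smul_mem _ c hX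

lemma Liou_Hc_mem_Sk (k : ℕ) (j : Fin 2) {A : Matrix (Fin 2 × Fin 2) (Fin 2 × Fin 2) ℂ}
    (hA : A ∈ Sk k) : Liou (Hc j) A ∈ Sk k := by
  cases k <;> exact Liou_Hc_mem_Oset j hA

lemma Liou_H0_mem_Sk_succ (k : ℕ) {A : Matrix (Fin 2 × Fin 2) (Fin 2 × Fin 2) ℂ}
    (hA : A ∈ Sk k) : Liou H0 A ∈ Sk (k + 1) :=
  subset_Oset _ ⟨A, hA, rfl⟩

lemma σz_kronecker_pow_mem_Sk (k : ℕ) : σz ⊗ₖ (σz ^ (k + 1)) ∈ Sk k := by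
  induction k with
  | zero =>
    rw [zero_add, pow_one]
    exact subset_Oset _ rfl
  | succ k ih =>
    -- Each of the three commutators contributes a factor `-2`.
    have key : Liou (Hc 1) (Liou H0 (Liou (Hc 0) (σz ⊗ₖ (σz ^ (k + 1)))))
        = (-8 : ℂ) • (σz ⊗ₖ (σz ^ (k + 1 + 1))) := by
      have h0 : Hc 0 = σx ⊗ₖ 1 := rfl
      have h1 : Hc 1 = σy ⊗ₖ 1 := rfl
      rw [h0, Liou_kronecker _ _ _ _ (Commute.one_left _), comm_σx_σz, one_mul, smul_kronecker,
        map_smul, H0, Liou_kronecker _ _ _ _ (Commute.self_pow _ _), comm_σz_σy, ← pow_succ',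
        smul_kronecker, map_smul, map_smul, h1, Liou_kronecker _ _ _ _ (Commute.one_left _),
        comm_σy_σx, one_mul, smul_kronecker, smul_smul, smul_smul]
      norm_num
    have hmem := Liou_Hc_mem_Sk (k + 1) 1 (Liou_H0_mem_Sk_succ k (Liou_Hc_mem_Sk k 0 ih))
    rw [key] at hmem
    exact (Submodule.smul_mem_iff _ (by norm_num)).1 hmem

lemma expectation_ψ00 (A : Matrix (Fin 2 × Fin 2) (Fin 2 × Fin 2) ℂ) :
    star ψ00 ⬝ᵥ (A *ᵥ ψ00) = A (0, 0) (0, 0) := by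
  have h : ψ00 = Pi.single (0, 0) 1 := by
    ext q
    simp [ψ00, Pi.single_apply]
  rw [h, ← Pi.single_star]
  simp

lemma σz_pow_apply_zero (n : ℕ) : (σz ^ n) 0 0 = 1 := by
  have h : σz = diagonal ![1, -1] := by
    ext i j
    fin_cases i <;> fin_cases j <;> simp [σz]
  rw [h, diagonal_pow]
  simp

/-- For the two-qubit example model with initial state `|0⟩⊗|0⟩`, for every `k ≥ 0` there is
`A ∈ S_k` with `⟨ψ₀, A ψ₀⟩ ≠ 0`: the necessary condition for full expressivity holds. -/
theorem exists_nonzero_expectation (k : ℕ) :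
    ∃ A ∈ Sk k, star ψ00 ⬝ᵥ (A *ᵥ ψ00) ≠ 0 := by
  refine ⟨_, σz_kronecker_pow_mem_Sk k, ?_⟩
  rw [expectation_ψ00, kronecker_apply, σz_pow_apply_zero]
  simp [σz]
end
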